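/- arXiv:1403.7610 — 2 statements merged into one kernel-verified Lean document; each statement's English description precedes it below -/
import Mathlib

section
/- In M₀, for every n ≥ 1 the equivalence relation induced by E_n on the set of n-element subsets of M₀ has infinitely many equivalence classes, and every one of its equivalence classes is infinite. -/
open FirstOrder Language Structure CategoryTheory

/-- The language `L₀` with a `2n`-ary relation symbol `E_n` for each `n ≥ 1`. -/
def L₀ : FirstOrder.Language where
  Functions := fun _ => Empty
  Relations := fun k => {n : ℕ // 0 < n ∧ k = n + n}

/-- The relation symbol `E_n`. -/
def Esymb (n : ℕ) (hn : 0 < n) : L₀.Relations (n + n) := ⟨n, hn, rfl⟩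

/-- `E_n(x̄, ȳ)` in an `L₀`-structure. -/
def ERel (M : Type*) [L₀.Structure M] (n : ℕ) (hn : 0 < n) (x y : Fin n → M) : Prop :=
  Structure.RelMap (Esymb n hn) (Fin.append x y)

/-- The defining conditions for membership in `K₀`: each `E_n` holds only on pairs of
injective `n`-tuples, is invariant under permuting the entries of each tuple separately,
and induces an equivalence relation on `n`-element subsets. -/
def IsK0Struct (C : Type*) [L₀.Structure C] : Prop :=
  ∀ (n : ℕ) (hn : 0 < n),
    (∀ x y : Fin n → C, ERel C n hn x y → Function.Injective x ∧ Function.Injective y) ∧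
    (∀ (x y : Fin n → C) (σ τ : Equiv.Perm (Fin n)),
        ERel C n hn x y → ERel C n hn (x ∘ σ) (y ∘ τ)) ∧
    (∀ x : Fin n → C, Function.Injective x → ERel C n hn x x) ∧
    (∀ x y : Fin n → C, ERel C n hn x y → ERel C n hn y x) ∧
    (∀ x y z : Fin n → C, ERel C n hn x y → ERel C n hn y z → ERel C n hn x z)

/-- The class `K₀` of finite `L₀`-structures as above. -/
def K₀ : Set (Bundled L₀.Structure) := {C | Finite C ∧ IsK0Struct C}

/-!
Over a finite substructure `A` of `M₀` one can adjoin finitely many new points, each declared to be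
a clone of some point of `A` or to be unrelated to `A`. Two `n`-sets are equivalent when replacing
clones by their originals turns them into `n`-sets in the same class of `A`, and all the `n`-sets
that contain an unrelated point, or two points with the same original, form one further class. The
result lies in `K₀`, so ultrahomogeneity realises it inside `M₀` over `A`. Adjoining `n` unrelated
points gives an `n`-set equivalent to no `n`-set of `A`; cloning the elements of an `n`-set of `A`
gives an equivalent `n`-set disjoint from `A`. Iterating either step gives the required infinite
sequence.
-/

universe u v

instance : L₀.IsRelational := fun _ => inferInstanceAs (IsEmpty Empty)

section ERel

variable {A B : Type*} [L₀.Structure A] [L₀.Structure B] {n : ℕ} {hn : 0 < n} {x y z : Fin n → A}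

theorem eRel_comp_iff (e : A ↪[L₀] B) :
    ERel B n hn (e ∘ x) (e ∘ y) ↔ ERel A n hn x y := by
  have append_comp : Fin.append (e ∘ x) (e ∘ y) = e ∘ Fin.append x y := by
    refine funext (Fin.addCases (fun i => ?_) fun i => ?_)
    · simp only [Fin.append_left, Function.comp_apply]
    · simp only [Fin.append_right, Function.comp_apply]
  rw [ERel, append_comp, e.map_rel, ERel]

/-- An injection preserving and reflecting every `E_n`, as an embedding of `L₀`-structures. -/
def embeddingOfERel (f : A → B) (hf : Function.Injective f)
    (h : ∀ (n : ℕ) (hn : 0 < n) (x y : Fin n → A),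
      ERel B n hn (f ∘ x) (f ∘ y) ↔ ERel A n hn x y) :
    A ↪[L₀] B where
  toFun := f
  inj' := hf
  map_fun' g := isEmptyElim g
  map_rel' := by
    rintro _ ⟨n, hn, rfl⟩ v
    have h_split := h n hn (fun i => v (Fin.castAdd n i)) (fun i => v (Fin.natAdd n i))
    rwa [ERel, ERel, Fin.append_castAdd_natAdd,
      show Fin.append (f ∘ fun i => v (Fin.castAdd n i)) (f ∘ fun i => v (Fin.natAdd n i)) = f ∘ v
        from Fin.append_castAdd_natAdd (f := f ∘ v)] at h_split

/-- The `L₀`-structure in which each `E_n` is interpreted by a given relation on `n`-tuples. -/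
abbrev structureOfERel {C : Type*} (R : ∀ n, 0 < n → (Fin n → C) → (Fin n → C) → Prop) :
    L₀.Structure C where
  funMap g := isEmptyElim g
  RelMap r v :=
    R r.1 r.2.1 (fun i => v (Fin.cast r.2.2.symm (Fin.castAdd r.1 i)))
      (fun i => v (Fin.cast r.2.2.symm (Fin.natAdd r.1 i)))

theorem eRel_structureOfERel {C : Type*}
    (R : ∀ n, 0 < n → (Fin n → C) → (Fin n → C) → Prop) (x y : Fin n → C) :
    letI := structureOfERel R
    ERel C n hn x y ↔ R n hn x y := by
  change R n hn (fun i => Fin.append x y (Fin.castAdd n i))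
    (fun i => Fin.append x y (Fin.natAdd n i)) ↔ _
  simp only [Fin.append_left, Fin.append_right]

namespace IsK0Struct

theorem injective_left (hA : IsK0Struct A) (h : ERel A n hn x y) : Function.Injective x :=
  ((hA n hn).1 x y h).1

theorem injective_right (hA : IsK0Struct A) (h : ERel A n hn x y) : Function.Injective y :=
  ((hA n hn).1 x y h).2

theorem comp_perm (hA : IsK0Struct A) (σ τ : Equiv.Perm (Fin n)) (h : ERel A n hn x y) :
    ERel A n hn (x ∘ σ) (y ∘ τ) :=
  (hA n hn).2.1 x y σ τ h

theorem refl (hA : IsK0Struct A) (hx : Function.Injective x) : ERel A n hn x x :=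
  (hA n hn).2.2.1 x hx

theorem symm (hA : IsK0Struct A) (h : ERel A n hn x y) : ERel A n hn y x :=
  (hA n hn).2.2.2.1 x y h

theorem trans (hA : IsK0Struct A) (hxy : ERel A n hn x y) (hyz : ERel A n hn y z) :
    ERel A n hn x z :=
  (hA n hn).2.2.2.2 x y z hxy hyz

end IsK0Struct

theorem isK0Struct_of_forall_fg (h : ∀ S : L₀.Substructure A, S.FG → IsK0Struct S) :
    IsK0Struct A := by
  have exists_lift (n : ℕ) (x y z : Fin n → A) :
      ∃ S : L₀.Substructure A, IsK0Struct S ∧ ∃ x' y' z' : Fin n → S,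
        S.subtype ∘ x' = x ∧ S.subtype ∘ y' = y ∧ S.subtype ∘ z' = z := by
    let F : Set A := Set.range x ∪ Set.range y ∪ Set.range z
    have hF : F.Finite :=
      ((Set.finite_range x).union (Set.finite_range y)).union (Set.finite_range z)
    have mem {a : A} (ha : a ∈ F) : a ∈ Substructure.closure L₀ F := Substructure.subset_closure ha
    exact ⟨Substructure.closure L₀ F, h _ (Substructure.fg_closure hF),
      fun i => ⟨x i, mem (.inl (.inl ⟨i, rfl⟩))⟩, fun i => ⟨y i, mem (.inl (.inr ⟨i, rfl⟩))⟩,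
      fun i => ⟨z i, mem (.inr ⟨i, rfl⟩)⟩, rfl, rfl, rfl⟩
  intro n hn
  refine ⟨fun x y hxy => ?_, fun x y σ τ hxy => ?_, fun x hx => ?_, fun x y hxy => ?_,
    fun x y z hxy hyz => ?_⟩
  · obtain ⟨S, hS, x, y, -, rfl, rfl, -⟩ := exists_lift n x y y
    rw [eRel_comp_iff] at hxy
    exact ⟨S.subtype.injective.comp (hS.injective_left hxy),
      S.subtype.injective.comp (hS.injective_right hxy)⟩
  · obtain ⟨S, hS, x, y, -, rfl, rfl, -⟩ := exists_lift n x y y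
    exact (eRel_comp_iff S.subtype).2 (hS.comp_perm σ τ ((eRel_comp_iff _).1 hxy))
  · obtain ⟨S, hS, x, -, -, rfl, -, -⟩ := exists_lift n x x x
    exact (eRel_comp_iff _).2 (hS.refl hx.of_comp)
  · obtain ⟨S, hS, x, y, -, rfl, rfl, -⟩ := exists_lift n x y y
    exact (eRel_comp_iff _).2 (hS.symm ((eRel_comp_iff _).1 hxy))
  · obtain ⟨S, hS, x, y, z, rfl, rfl, rfl⟩ := exists_lift n x y z
    exact (eRel_comp_iff _).2 (hS.trans ((eRel_comp_iff _).1 hxy) ((eRel_comp_iff _).1 hyz))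

end ERel

/-- The extension of `A` by a set `D` of new points, where `d` is a clone of `a` when
`q d = some a`, and is unrelated to `A` when `q d = none`. The map `q` is a parameter of the type
because the `L₀`-structure depends on it. -/
inductive CloneExtension {A : Type u} {D : Type v} (q : D → Option A) : Type max u v
  | old (a : A)
  | new (d : D)

namespace CloneExtension

variable {A : Type u} {D : Type v} {q : D → Option A} {n : ℕ} {hn : 0 < n}

theorem old_injective : Function.Injective (old : A → CloneExtension q) := fun _ _ => old.inj

theorem new_injective : Function.Injective (new : D → CloneExtension q) := fun _ _ => new.inj

instance [Finite A] [Finite D] : Finite (CloneExtension q) :=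
  .of_surjective (Sum.elim old new) fun
    | old a => ⟨.inl a, rfl⟩
    | new d => ⟨.inr d, rfl⟩

/-- The point of `A` that a point of the extension stands for, if there is one. -/
def original : CloneExtension q → Option A
  | old a => some a
  | new d => q d

variable [L₀.Structure A]

/-- The tuples of `A` equivalent to the tuple of originals of `x`. For `A` satisfying the axioms
of `K₀`, this set is empty exactly when some original is missing or two of them coincide. -/
def shadow (hn : 0 < n) (x : Fin n → CloneExtension q) : Set (Fin n → A) :=
  {w | ∃ a : Fin n → A, some ∘ a = original ∘ x ∧ ERel A n hn a w}

instance : L₀.Structure (CloneExtension q) :=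
  structureOfERel fun _ hn x y =>
    Function.Injective x ∧ Function.Injective y ∧ shadow hn x = shadow hn y

theorem eRel_iff {x y : Fin n → CloneExtension q} :
    ERel (CloneExtension q) n hn x y ↔
      Function.Injective x ∧ Function.Injective y ∧ shadow hn x = shadow hn y :=
  eRel_structureOfERel (fun _ hn x y =>
    Function.Injective x ∧ Function.Injective y ∧ shadow hn x = shadow hn y) x y

theorem shadow_eq_of_original_comp_eq {x : Fin n → CloneExtension q} {a : Fin n → A}
    (h : original ∘ x = some ∘ a) : shadow hn x = {w | ERel A n hn a w} := by
  ext w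
  constructor
  · rintro ⟨b, hb, hbw⟩
    rwa [(Option.some_injective A).comp_left (hb.trans h)] at hbw
  · exact fun haw => ⟨a, h.symm, haw⟩

theorem shadow_comp_perm (hA : IsK0Struct A) (x : Fin n → CloneExtension q)
    (σ : Equiv.Perm (Fin n)) : shadow hn (x ∘ σ) = shadow hn x := by
  have subset_comp_perm (x : Fin n → CloneExtension q) (σ : Equiv.Perm (Fin n)) :
      shadow hn x ⊆ shadow hn (x ∘ σ) := by
    rintro w ⟨a, ha, haw⟩
    exact ⟨a ∘ σ, congrArg (· ∘ σ) ha, hA.comp_perm σ 1 haw⟩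
  refine (subset_comp_perm x σ).antisymm' ?_
  simpa only [Function.comp_assoc, Equiv.self_comp_symm, Function.comp_id]
    using subset_comp_perm (x ∘ σ) σ.symm

theorem isK0Struct (hA : IsK0Struct A) : IsK0Struct (CloneExtension q) := by
  intro n hn
  refine ⟨fun x y h => ?_, fun x y σ τ h => ?_, fun x hx => eRel_iff.2 ⟨hx, hx, rfl⟩,
    fun x y h => ?_, fun x y z hxy hyz => ?_⟩
  · obtain ⟨hx, hy, -⟩ := eRel_iff.1 h
    exact ⟨hx, hy⟩
  · obtain ⟨hx, hy, h_shadow⟩ := eRel_iff.1 h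
    refine eRel_iff.2 ⟨hx.comp σ.injective, hy.comp τ.injective, ?_⟩
    rw [shadow_comp_perm hA, shadow_comp_perm hA, h_shadow]
  · obtain ⟨hx, hy, h_shadow⟩ := eRel_iff.1 h
    exact eRel_iff.2 ⟨hy, hx, h_shadow.symm⟩
  · obtain ⟨hx, -, h_xy⟩ := eRel_iff.1 hxy
    obtain ⟨-, hz, h_yz⟩ := eRel_iff.1 hyz
    exact eRel_iff.2 ⟨hx, hz, h_xy.trans h_yz⟩

/-- The inclusion of `A` into its extension. -/
def inclusion (hA : IsK0Struct A) (q : D → Option A) : A ↪[L₀] CloneExtension q :=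
  embeddingOfERel old old_injective fun n hn x y => by
    have shadow_old (x : Fin n → A) :
        shadow hn (old ∘ x : Fin n → CloneExtension q) = {w | ERel A n hn x w} :=
      shadow_eq_of_original_comp_eq rfl
    rw [eRel_iff, shadow_old, shadow_old]
    constructor
    · rintro ⟨-, hy, h⟩
      exact h.symm.subset (hA.refl hy.of_comp)
    · intro h
      refine ⟨old_injective.comp (hA.injective_left h),
        old_injective.comp (hA.injective_right h), ?_⟩
      exact Set.ext fun w => ⟨hA.trans (hA.symm h), hA.trans h⟩

end CloneExtension

section FraisseLimit

variable {M : Type u} [L₀.Structure M]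

theorem isK0Struct_of_fg_of_age_eq (hage : L₀.age M = K₀) {S : L₀.Substructure M} (hS : S.FG) :
    IsK0Struct S :=
  (hage.subset (age.fg_substructure hS)).2

theorem isK0Struct_of_age_eq (hage : L₀.age M = K₀) : IsK0Struct M :=
  isK0Struct_of_forall_fg fun _ => isK0Struct_of_fg_of_age_eq hage

theorem exists_cloneExtension_embedding (hUH : L₀.IsUltrahomogeneous M) (hage : L₀.age M = K₀)
    {S : L₀.Substructure M} (hS : S.FG) {D : Type} [Finite D] (q : D → Option S) :
    ∃ e : CloneExtension q ↪[L₀] M, ∀ s : S, e (.old s) = s := by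
  have : Finite S := hS.finite
  have hS_K0 : IsK0Struct S := isK0Struct_of_fg_of_age_eq hage hS
  have h_mem : Bundled.of (c := L₀.Structure) (CloneExtension q) ∈ L₀.age M :=
    hage.superset ⟨inferInstanceAs (Finite (CloneExtension q)), CloneExtension.isK0Struct hS_K0⟩
  obtain ⟨e, he⟩ := hUH.extend_embedding (h := h_mem.2) ((Substructure.fg_iff_structure_fg S).1 hS)
    S.subtype (CloneExtension.inclusion hS_K0 q)
  exact ⟨e, fun s => (DFunLike.congr_fun he s).symm⟩

theorem exists_forall_not_eRel (hUH : L₀.IsUltrahomogeneous M) (hage : L₀.age M = K₀)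
    {F : Set M} (hF : F.Finite) {n : ℕ} (hn : 0 < n) :
    ∃ y : Fin n → M, Function.Injective y ∧
      ∀ x : Fin n → M, Set.range x ⊆ F → ¬ ERel M n hn x y := by
  have hS : (Substructure.closure L₀ F).FG := Substructure.fg_closure hF
  obtain ⟨e, he⟩ := exists_cloneExtension_embedding hUH hage hS fun _ : Fin n => none
  refine ⟨e ∘ .new, e.injective.comp CloneExtension.new_injective, fun x hxF hxy => ?_⟩
  let a : Fin n → Substructure.closure L₀ F :=
    fun i => ⟨x i, Substructure.subset_closure (hxF ⟨i, rfl⟩)⟩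
  have hxa : x = e ∘ .old ∘ a := funext fun i => (he (a i)).symm
  rw [hxa, eRel_comp_iff, CloneExtension.eRel_iff] at hxy
  have h_mem : a ∈ CloneExtension.shadow hn
      (CloneExtension.old ∘ a : Fin n → CloneExtension fun _ : Fin n => none) :=
    ⟨a, rfl, (isK0Struct_of_fg_of_age_eq hage hS).refl hxy.1.of_comp⟩
  rw [hxy.2.2] at h_mem
  obtain ⟨b, hb, -⟩ := h_mem
  exact Option.some_ne_none (b ⟨0, hn⟩) (congrFun hb ⟨0, hn⟩)

theorem exists_eRel_disjoint_range (hUH : L₀.IsUltrahomogeneous M) (hage : L₀.age M = K₀)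
    {F : Set M} (hF : F.Finite) {n : ℕ} (hn : 0 < n) {x : Fin n → M}
    (hx : Function.Injective x) :
    ∃ y : Fin n → M, Function.Injective y ∧ ERel M n hn x y ∧ Disjoint F (Set.range y) := by
  let S := Substructure.closure L₀ (F ∪ Set.range x)
  have hS : S.FG := Substructure.fg_closure (hF.union (Set.finite_range x))
  let a : Fin n → S := fun i => ⟨x i, Substructure.subset_closure (.inr ⟨i, rfl⟩)⟩
  obtain ⟨e, he⟩ := exists_cloneExtension_embedding hUH hage hS (some ∘ a)
  have hxa : x = e ∘ .old ∘ a := funext fun i => (he (a i)).symm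
  refine ⟨e ∘ .new, e.injective.comp CloneExtension.new_injective, ?_, ?_⟩
  · rw [hxa] at hx ⊢
    rw [eRel_comp_iff, CloneExtension.eRel_iff]
    refine ⟨hx.of_comp, CloneExtension.new_injective, ?_⟩
    rw [CloneExtension.shadow_eq_of_original_comp_eq (a := a) rfl,
      CloneExtension.shadow_eq_of_original_comp_eq (a := a) rfl]
  · rw [Set.disjoint_left]
    rintro _ hF ⟨i, rfl⟩
    let s : S := ⟨e (.new i), Substructure.subset_closure (.inl hF)⟩
    nomatch e.injective (he s)

theorem M0_classes_infinite_general (hUH : L₀.IsUltrahomogeneous M) (hage : L₀.age M = K₀)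
    (n : ℕ) (hn : 0 < n) :
    (∃ f : ℕ → (Fin n → M), (∀ i, Function.Injective (f i)) ∧
        ∀ i j, i ≠ j → ¬ ERel M n hn (f i) (f j)) ∧
    (∀ x : Fin n → M, Function.Injective x →
      ∃ g : ℕ → (Fin n → M), (∀ i, Function.Injective (g i)) ∧
        (∀ i, ERel M n hn x (g i)) ∧
        ∀ i j, i ≠ j → Set.range (g i) ≠ Set.range (g j)) := by
  have finite_iUnion (s : Finset (Fin n → M)) : (⋃ x ∈ s, Set.range x).Finite :=
    s.finite_toSet.biUnion fun x _ => Set.finite_range x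
  constructor
  · have : Std.Symm fun x y : Fin n → M => ¬ ERel M n hn x y :=
      ⟨fun _ _ h h' => h ((isK0Struct_of_age_eq hage).symm h')⟩
    refine exists_seq_of_forall_finset_exists' Function.Injective (¬ ERel M n hn · ·) fun s _ => ?_
    obtain ⟨y, hy, hsy⟩ := exists_forall_not_eRel hUH hage (finite_iUnion s) hn
    exact ⟨y, hy, fun x hx => hsy x (Set.subset_biUnion_of_mem (u := Set.range) hx)⟩
  · intro x hx
    have : Std.Symm fun y z : Fin n → M => Set.range y ≠ Set.range z := ⟨fun _ _ => Ne.symm⟩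
    obtain ⟨g, hg, hg_range⟩ := exists_seq_of_forall_finset_exists'
      (fun y => Function.Injective y ∧ ERel M n hn x y)
      (fun y z => Set.range y ≠ Set.range z) fun s _ => by
        obtain ⟨y, hy, hxy, hsy⟩ := exists_eRel_disjoint_range hUH hage (finite_iUnion s) hn hx
        refine ⟨y, ⟨hy, hxy⟩, fun z hz hzy => ?_⟩
        have hzy_disj := hsy.mono_left (Set.subset_biUnion_of_mem (u := Set.range) hz)
        exact hzy_disj.ne (Set.range_nonempty_iff_nonempty.2 ⟨⟨0, hn⟩⟩).ne_empty hzy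
    exact ⟨g, fun i => (hg i).1, fun i => (hg i).2, hg_range⟩

end FraisseLimit

/-- in the Fraïssé limit `M₀` of `K₀`, for every `n ≥ 1` the equivalence
relation induced by `E_n` on `n`-element subsets has infinitely many classes, and each
class is infinite (contains infinitely many distinct `n`-element subsets). -/
theorem M0_classes_infinite (M₀ : Type) [L₀.Structure M₀] [Countable M₀]
    (hUH : L₀.IsUltrahomogeneous M₀) (hage : L₀.age M₀ = K₀) :
    ∀ (n : ℕ) (hn : 0 < n),
      (∃ f : ℕ → (Fin n → M₀), (∀ i, Function.Injective (f i)) ∧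
          ∀ i j, i ≠ j → ¬ ERel M₀ n hn (f i) (f j)) ∧
      (∀ x : Fin n → M₀, Function.Injective x →
        ∃ g : ℕ → (Fin n → M₀), (∀ i, Function.Injective (g i)) ∧
          (∀ i, ERel M₀ n hn x (g i)) ∧
          ∀ i j, i ≠ j → Set.range (g i) ≠ Set.range (g j)) :=
  M0_classes_infinite_general hUH hage
end

section
/- K_P is a Fraïssé class, so it has a Fraïssé limit M (a countable ultrahomogeneous L_P-structure with age K_P), and the first-order theory of M is ℵ₀-categorical. -/
open FirstOrder Language Structure CategoryTheory

/-- The language `L_P`: a `2n`-ary symbol `E_n` for each `n ≥ 1` and a `2n`-ary symbol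
`<_n` for each `n ∈ P`. -/
def LP (P : Set ℕ) : FirstOrder.Language where
  Functions := fun _ => Empty
  Relations := fun k => {n : ℕ // 0 < n ∧ k = n + n} ⊕ {n : ℕ // n ∈ P ∧ k = n + n}

/-- The symbol `E_n` of `L_P`. -/
def EsymbP (P : Set ℕ) (n : ℕ) (hn : 0 < n) : (LP P).Relations (n + n) :=
  Sum.inl ⟨n, hn, rfl⟩

/-- The symbol `<_n` of `L_P`. -/
def LTsymbP (P : Set ℕ) (n : ℕ) (hn : n ∈ P) : (LP P).Relations (n + n) :=
  Sum.inr ⟨n, hn, rfl⟩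

/-- `E_n(x̄, ȳ)` in an `L_P`-structure. -/
def ERelP (P : Set ℕ) (M : Type*) [i : (LP P).Structure M] (n : ℕ) (hn : 0 < n)
    (x y : Fin n → M) : Prop :=
  @Structure.RelMap (LP P) M i (n + n) (EsymbP P n hn) (Fin.append x y)

/-- `x̄ <_n ȳ` in an `L_P`-structure. -/
def LTRelP (P : Set ℕ) (M : Type*) [i : (LP P).Structure M] (n : ℕ) (hn : n ∈ P)
    (x y : Fin n → M) : Prop :=
  @Structure.RelMap (LP P) M i (n + n) (LTsymbP P n hn) (Fin.append x y)

/-- The defining conditions for membership in `K_P`: the `{E_n}`-part satisfies the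
`K₀`-conditions, and for `n ∈ P` the relation `<_n` holds only on injective tuples, is
`E_n`-invariant, and induces a strict linear order on `E_n`-classes. -/
def IsKPStruct (P : Set ℕ) (C : Type*) [(LP P).Structure C] : Prop :=
  (∀ (n : ℕ) (hn : 0 < n),
    (∀ x y : Fin n → C, ERelP P C n hn x y → Function.Injective x ∧ Function.Injective y) ∧
    (∀ (x y : Fin n → C) (σ τ : Equiv.Perm (Fin n)),
        ERelP P C n hn x y → ERelP P C n hn (x ∘ σ) (y ∘ τ)) ∧
    (∀ x : Fin n → C, Function.Injective x → ERelP P C n hn x x) ∧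
    (∀ x y : Fin n → C, ERelP P C n hn x y → ERelP P C n hn y x) ∧
    (∀ x y z : Fin n → C, ERelP P C n hn x y → ERelP P C n hn y z → ERelP P C n hn x z)) ∧
  (∀ (n : ℕ) (hn : n ∈ P) (hn0 : 0 < n),
    (∀ x y : Fin n → C, LTRelP P C n hn x y → Function.Injective x ∧ Function.Injective y) ∧
    (∀ x x' y y' : Fin n → C, ERelP P C n hn0 x x' → ERelP P C n hn0 y y' →
        LTRelP P C n hn x y → LTRelP P C n hn x' y') ∧
    (∀ x y : Fin n → C, LTRelP P C n hn x y → ¬ ERelP P C n hn0 x y) ∧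
    (∀ x y z : Fin n → C, LTRelP P C n hn x y → LTRelP P C n hn y z → LTRelP P C n hn x z) ∧
    (∀ x y : Fin n → C, Function.Injective x → Function.Injective y →
        ¬ ERelP P C n hn0 x y → LTRelP P C n hn x y ∨ LTRelP P C n hn y x))

/-- The class `K_P` of finite `L_P`-structures as above. -/
def KP (P : Set ℕ) : Set (Bundled (LP P).Structure) := {C | Finite C ∧ IsKPStruct P C}

/-!
An `L_P`-structure in `K_P` amounts to a rational rank for each finite set of points: sets of the
same size are equivalent when they have the same rank, and `<_n` compares ranks. Any embedding
between members of `K_P` lifts to rankings, because a partial order-preserving map from a finite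
linear order to `ℚ` extends. Building a ranking of a countable set in which every finite table of
ranks is realized by a new point therefore gives an ultrahomogeneous structure with age `K_P`.

The relation symbols hold only on tuples whose arity is bounded by the number of distinct entries,
so a tuple of fixed length has finitely many atomic types, and finitely many atomic formulas
separate them. Consequently every structure elementarily equivalent to the limit realizes the same
atomic types and the same one-point extensions, and countable ones are isomorphic by back and forth.
-/

/-! ### Ultrahomogeneous structures with finitely many atomic types -/

section AtomicTypes

variable {L : FirstOrder.Language} {M N N₁ N₂ α β : Type*} [L.Structure M] [L.Structure N]
  [L.Structure N₁] [L.Structure N₂]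

theorem exists_finite_separating {𝒮 : Set (Set β)} (h𝒮 : 𝒮.Finite) :
    ∃ Δ : Set β, Δ.Finite ∧ ∀ s ∈ 𝒮, ∀ t ∈ 𝒮, (∀ x ∈ Δ, x ∈ s ↔ x ∈ t) → s = t := by
  have hsep : ∀ s t : Set β, ∃ D : Set β, D.Finite ∧ ((∀ x ∈ D, x ∈ s ↔ x ∈ t) → s = t) := by
    intro s t
    by_cases hst : s = t
    · exact ⟨∅, Set.finite_empty, fun _ => hst⟩
    · obtain ⟨x, hx⟩ := not_forall.1 (mt Set.ext hst)
      exact ⟨{x}, Set.finite_singleton x, fun h => absurd (h x rfl) hx⟩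
  choose D hDfin hD using hsep
  refine ⟨⋃ s ∈ 𝒮, ⋃ t ∈ 𝒮, D s t,
    h𝒮.biUnion fun s _ => h𝒮.biUnion fun t _ => hDfin s t, fun s hs t ht h => ?_⟩
  exact hD s t fun x hx => h x (Set.mem_biUnion hs (Set.mem_biUnion ht hx))

variable (L) in
/-- The set of atomic formulas satisfied by a tuple. It carries the same information as the
quantifier-free type of the tuple. -/
def atomicType (a : α → M) : Set (L.Formula α) :=
  {φ | φ.IsAtomic ∧ φ.Realize a}

theorem realize_iff_of_atomicType_eq {a : α → M} {b : α → N}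
    (hab : atomicType L a = atomicType L b) {φ : L.Formula α} (hφ : φ.IsAtomic) :
    φ.Realize a ↔ φ.Realize b := by
  simpa only [atomicType, Set.mem_ofPred_eq, hφ, true_and] using Set.ext_iff.1 hab φ

theorem atomicType_embedding_comp (f : M ↪[L] N) (a : α → M) :
    atomicType L (f ∘ a) = atomicType L a := by
  ext φ
  refine and_congr_right fun hφ => ?_
  simpa only [Formula.Realize, Unique.eq_default (f ∘ default)] using
    hφ.isQF.realize_embedding f (v := a) (xs := default)

theorem exists_term_realize_eq {a : α → M} {x : M}
    (hx : x ∈ Substructure.closure L (Set.range a)) : ∃ t : L.Term α, t.realize a = x := by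
  obtain ⟨t, rfl⟩ := Substructure.mem_closure_iff_exists_term.1 hx
  exact ⟨t.relabel (Set.rangeSplitting a), by rw [Term.realize_relabel, Set.comp_rangeSplitting]⟩

theorem closure_range_embedding_ext {a : α → M}
    {f g : Substructure.closure L (Set.range a) ↪[L] N}
    (hfg : ∀ i, f ⟨a i, Substructure.subset_closure (Set.mem_range_self i)⟩ =
      g ⟨a i, Substructure.subset_closure (Set.mem_range_self i)⟩) : f = g := by
  let a' : α → Substructure.closure L (Set.range a) :=
    fun i => ⟨a i, Substructure.subset_closure (Set.mem_range_self i)⟩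
  ext x
  obtain ⟨t, ht⟩ := exists_term_realize_eq x.2
  obtain rfl : t.realize a' = x := Subtype.ext <| by
    rw [← ht]
    exact (HomClass.realize_term (Substructure.subtype _) (v := a') (t := t)).symm
  rw [← HomClass.realize_term, ← HomClass.realize_term]
  exact congrArg t.realize (funext hfg)

theorem exists_closure_range_embedding {a : α → M} {b : α → N}
    (hab : atomicType L a = atomicType L b) :
    ∃ e : Substructure.closure L (Set.range a) ↪[L] N,
      ∀ i, e ⟨a i, Substructure.subset_closure (Set.mem_range_self i)⟩ = b i := by
  have hterm : ∀ s t : L.Term α, s.realize a = t.realize a ↔ s.realize b = t.realize b := by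
    intro s t
    simpa only [Formula.realize_equal] using
      realize_iff_of_atomicType_eq hab (φ := s.equal t) (.equal _ _)
  have hrel : ∀ {n : ℕ} (R : L.Relations n) (ts : Fin n → L.Term α),
      RelMap R (fun i => (ts i).realize a) ↔ RelMap R (fun i => (ts i).realize b) := by
    intro n R ts
    simpa only [Formula.realize_rel] using
      realize_iff_of_atomicType_eq hab (φ := R.formula ts) (.rel _ _)
  choose t ht using fun x : Substructure.closure L (Set.range a) => exists_term_realize_eq x.2
  refine ⟨⟨⟨fun x => (t x).realize b, fun x y hxy => ?_⟩, fun f x => ?_, fun R x => ?_⟩,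
    fun i => ?_⟩
  · exact Subtype.ext (by rw [← ht x, ← ht y, (hterm _ _).2 hxy])
  · refine (hterm _ (Term.func f fun i => t (x i))).1 ?_
    simp only [ht, Term.realize_func]
    rfl
  · refine (hrel R fun i => t (x i)).symm.trans ?_
    simp only [ht]
    rfl
  · exact (hterm _ (Term.var i)).1 (ht _)

/-- The conjunction over `φ ∈ Δ` of whichever of `φ`, `¬φ` holds at `a`. -/
noncomputable def signFormula (Δ : Set (L.Formula α)) [Finite Δ] (a : α → M) : L.Formula α :=
  open Classical in Formula.iInf fun φ : Δ => if φ.1.Realize a then φ.1 else ∼φ.1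

theorem realize_signFormula {Δ : Set (L.Formula α)} [Finite Δ] {a : α → M} {b : α → N} :
    (signFormula Δ a).Realize b ↔ ∀ φ ∈ Δ, φ.Realize a ↔ φ.Realize b := by
  classical
  simp only [signFormula, Formula.realize_iInf, Subtype.forall]
  refine forall₂_congr fun φ _ => ?_
  split_ifs with h <;> simp [h]

theorem exists_realize_congr [Finite α] (h : N ≅[L] M) (φ : L.Formula α) :
    (∃ x : α → N, φ.Realize x) ↔ ∃ x : α → M, φ.Realize x := by
  have hφ := h.realize_sentence (Formula.iExs α (φ.relabel Sum.inr : L.Formula (Empty ⊕ α)))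
  simpa only [Sentence.Realize, Formula.realize_iExs, Formula.realize_relabel,
    Sum.elim_comp_inr] using hφ

theorem exists_agreeing_tuple [Finite α] (h : N ≅[L] M) {Δ : Set (L.Formula α)}
    (hΔ : Δ.Finite) (a : α → N) : ∃ x : α → M, ∀ φ ∈ Δ, φ.Realize a ↔ φ.Realize x := by
  have := hΔ.to_subtype
  simpa only [realize_signFormula] using
    (exists_realize_congr h (signFormula Δ a)).1 ⟨a, realize_signFormula.2 fun _ _ => Iff.rfl⟩

variable (L M) in
/-- For each finite index type, only finitely many atomic types are realized by tuples of `M`. -/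
def FinitelyManyAtomicTypes : Prop :=
  ∀ (α : Type) [Finite α], (Set.range fun a : α → M => atomicType L a).Finite

theorem exists_term_eq_var [L.IsRelational] (t : L.Term α) : ∃ i, t = Term.var i := by
  cases t with
  | var i => exact ⟨i, rfl⟩
  | func f => exact isEmptyElim f

theorem finite_term [L.IsRelational] [Finite α] : Finite (L.Term α) :=
  Finite.of_surjective Term.var fun t => (exists_term_eq_var t).imp fun _ h => h.symm

theorem finitelyManyAtomicTypes_of_arity_le [L.IsRelational] [∀ k, Finite (L.Relations k)]
    {d : ℕ → ℕ} (hmono : Monotone d)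
    (hd : ∀ {k} (R : L.Relations k) (x : Fin k → M), RelMap R x → k ≤ d (Set.range x).ncard) :
    FinitelyManyAtomicTypes L M := by
  intro α _
  have : Finite (L.Term (α ⊕ Fin 0)) := finite_term
  let equalities : Set (L.Formula α) :=
    Set.range fun p : L.Term (α ⊕ Fin 0) × L.Term (α ⊕ Fin 0) => p.1.bdEqual p.2
  let relations (k : ℕ) : Set (L.Formula α) :=
    Set.range fun p : L.Relations k × (Fin k → L.Term (α ⊕ Fin 0)) => p.1.boundedFormula p.2
  have hrel : (⋃ k ∈ Set.Iic (d (Nat.card α)), relations k).Finite :=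
    (Set.finite_Iic _).biUnion fun k _ => Set.finite_range _
  refine ((Set.finite_range _ : equalities.Finite).union hrel).finite_subsets.subset ?_
  rintro _ ⟨a, rfl⟩ φ ⟨hφ, hφa⟩
  cases hφ with
  | equal s t => exact .inl ⟨(s, t), rfl⟩
  | @rel k R ts =>
    have hsub : Set.range (fun i => (ts i).realize (Sum.elim a default)) ⊆ Set.range a := by
      rintro _ ⟨i, rfl⟩
      obtain ⟨j | j, hj⟩ := exists_term_eq_var (ts i)
      · exact ⟨j, (congrArg (Term.realize (Sum.elim a default)) hj).symm⟩
      · exact j.elim0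
    refine .inr (Set.mem_biUnion (?_ : k ≤ _) ⟨(R, ts), rfl⟩)
    refine (hd R _ (BoundedFormula.realize_rel.1 hφa)).trans (hmono ?_)
    refine (Set.ncard_le_ncard hsub (Set.finite_range a)).trans ?_
    exact (Nat.card_coe_set_eq _).symm.trans_le (Finite.card_range_le a)

theorem FinitelyManyAtomicTypes.exists_separating (hM : FinitelyManyAtomicTypes L M)
    (α : Type) [Finite α] : ∃ Δ : Set (L.Formula α), Δ.Finite ∧ (∀ φ ∈ Δ, φ.IsAtomic) ∧
      ∀ x y : α → M, (∀ φ ∈ Δ, φ.Realize x ↔ φ.Realize y) →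
        atomicType L x = atomicType L y := by
  obtain ⟨Δ, hΔ, hsep⟩ := exists_finite_separating (hM α)
  refine ⟨{φ ∈ Δ | φ.IsAtomic}, hΔ.sep _, fun φ hφ => hφ.2, fun x y hxy => ?_⟩
  exact hsep _ ⟨x, rfl⟩ _ ⟨y, rfl⟩ fun φ hφ => and_congr_right fun hat => hxy φ ⟨hφ, hat⟩

theorem realize_iff_of_isUltrahomogeneous [Finite α] (hM : L.IsUltrahomogeneous M)
    {x y : α → M} (hxy : atomicType L x = atomicType L y) (θ : L.Formula α) :
    θ.Realize x ↔ θ.Realize y := by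
  obtain ⟨e, he⟩ := exists_closure_range_embedding hxy
  obtain ⟨g, hg⟩ := hM _ (Substructure.fg_closure (Set.finite_range x)) e
  have hgx : g ∘ x = y := by
    funext i
    rw [← he i, hg]
    rfl
  rw [← hgx, StrongHomClass.realize_formula]

section Categorical

variable (hM : L.IsUltrahomogeneous M) (hfin : FinitelyManyAtomicTypes L M)
  (h₁ : N₁ ≅[L] M) (h₂ : N₂ ≅[L] M)

include hM h₁ h₂ in
theorem realize_iff_of_agree {α : Type*} [Finite α] {Δ : Set (L.Formula α)} (hΔ : Δ.Finite)
    (hsep : ∀ x y : α → M, (∀ φ ∈ Δ, φ.Realize x ↔ φ.Realize y) →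
      atomicType L x = atomicType L y)
    {a : α → N₁} {b : α → N₂} (hab : ∀ φ ∈ Δ, φ.Realize a ↔ φ.Realize b) (θ : L.Formula α) :
    θ.Realize a ↔ θ.Realize b := by
  obtain ⟨x, hx⟩ := exists_agreeing_tuple h₁ (hΔ.insert θ) a
  obtain ⟨y, hy⟩ := exists_agreeing_tuple h₂ (hΔ.insert θ) b
  have hxy : atomicType L x = atomicType L y := hsep x y fun φ hφ =>
    (hx φ (.inr hφ)).symm.trans ((hab φ hφ).trans (hy φ (.inr hφ)))
  exact (hx θ (.inl rfl)).trans
    ((realize_iff_of_isUltrahomogeneous hM hxy θ).trans (hy θ (.inl rfl)).symm)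

include hM hfin h₁ h₂ in
theorem exists_atomicType_extend_eq {α : Type} [Finite α] {a : α → N₁} {b : α → N₂}
    (hab : atomicType L a = atomicType L b) (c : N₁) :
    ∃ d : N₂, atomicType L (Sum.elim a fun _ : Unit => c) =
      atomicType L (Sum.elim b fun _ : Unit => d) := by
  obtain ⟨Γ, hΓ, hΓat, hΓsep⟩ := hfin.exists_separating α
  obtain ⟨Δ, hΔ, -, hΔsep⟩ := hfin.exists_separating (α ⊕ Unit)
  have := hΔ.to_subtype
  let χ := signFormula Δ (Sum.elim a fun _ : Unit => c)
  have hχa : (χ.iExs Unit).Realize a :=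
    Formula.realize_iExs.2 ⟨fun _ => c, realize_signFormula.2 fun _ _ => Iff.rfl⟩
  have hχb : (χ.iExs Unit).Realize b := (realize_iff_of_agree hM h₁ h₂ hΓ hΓsep
    (fun φ hφ => realize_iff_of_atomicType_eq hab (hΓat φ hφ)) _).1 hχa
  obtain ⟨d, hd⟩ := Formula.realize_iExs.1 hχb
  refine ⟨d (), ?_⟩
  ext φ
  exact and_congr_right fun _ =>
    realize_iff_of_agree hM h₁ h₂ hΔ hΔsep (realize_signFormula.1 hd) φ

include hM hfin h₁ h₂ in
theorem isExtensionPair_of_elementarilyEquivalent : L.IsExtensionPair N₁ N₂ := by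
  rw [isExtensionPair_iff_exists_embedding_closure_singleton_sup]
  intro S hS f m
  obtain ⟨n, a, rfl⟩ := Substructure.fg_iff_exists_fin_generating_family.1 hS
  let a' : Fin n → Substructure.closure L (Set.range a) :=
    fun i => ⟨a i, Substructure.subset_closure (Set.mem_range_self i)⟩
  have hab : atomicType L a = atomicType L (f ∘ a') := by
    rw [atomicType_embedding_comp f a', ← atomicType_embedding_comp (Substructure.subtype _) a']
    rfl
  obtain ⟨d, hd⟩ := exists_atomicType_extend_eq hM hfin h₁ h₂ hab m
  obtain ⟨e, he⟩ := exists_closure_range_embedding hd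
  have hle : Substructure.closure L {m} ⊔ Substructure.closure L (Set.range a) ≤
      Substructure.closure L (Set.range (Sum.elim a fun _ : Unit => m)) := by
    rw [← Substructure.closure_union]
    refine Substructure.closure_mono ?_
    rw [Set.Sum.elim_range, Set.range_const, Set.union_comm]
  exact ⟨e.comp (Substructure.inclusion hle),
    closure_range_embedding_ext fun i => (he (Sum.inl i)).symm⟩

include hM hfin in
theorem categorical_completeTheory_of_isUltrahomogeneous :
    Cardinal.aleph0.Categorical (L.completeTheory M) := by
  intro Q₁ Q₂ hQ₁ hQ₂
  have : Countable Q₁ := Cardinal.mk_le_aleph0_iff.1 hQ₁.le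
  have : Countable Q₂ := Cardinal.mk_le_aleph0_iff.1 hQ₂.le
  have h₁ : Q₁ ≅[L] M := elementarilyEquivalent_iff.2 (realize_iff_of_model_completeTheory M Q₁)
  have h₂ : Q₂ ≅[L] M := elementarilyEquivalent_iff.2 (realize_iff_of_model_completeTheory M Q₂)
  have hempty : atomicType L (default : Empty → Q₁) = atomicType L (default : Empty → Q₂) :=
    Set.ext fun φ => and_congr_right fun _ => (h₁.trans h₂.symm).realize_sentence φ
  obtain ⟨e, -⟩ := exists_closure_range_embedding hempty
  obtain ⟨g, -⟩ := equiv_between_cg cg_of_countable cg_of_countable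
    ⟨⟨_, e.toHom.range, e.equivRange⟩, Substructure.fg_closure (Set.finite_range _)⟩
    (isExtensionPair_of_elementarilyEquivalent hM hfin h₁ h₂)
    (isExtensionPair_of_elementarilyEquivalent hM hfin h₂ h₁)
  exact ⟨g⟩

end Categorical

end AtomicTypes

/-! ### Structures over `L_P` -/

section LPStructures

variable {P : Set ℕ} {X Y : Type*} {n : ℕ}

instance isRelational_LP : (LP P).IsRelational :=
  fun _ => inferInstanceAs (IsEmpty Empty)

theorem subsingleton_arity (p : ℕ → Prop) (k : ℕ) : Subsingleton {n : ℕ // p n ∧ k = n + n} :=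
  ⟨fun a b => Subtype.ext (by have := a.2.2; have := b.2.2; lia)⟩

instance finite_relations_LP (k : ℕ) : Finite ((LP P).Relations k) := by
  have := subsingleton_arity (0 < ·) k
  have := subsingleton_arity (· ∈ P) k
  exact inferInstanceAs (Finite (_ ⊕ _))

theorem comp_append {α β : Type*} (f : α → β) (x y : Fin n → α) :
    f ∘ Fin.append x y = Fin.append (f ∘ x) (f ∘ y) := by
  funext i
  refine Fin.addCases (fun j => ?_) (fun j => ?_) i <;>
    simp only [Function.comp_apply, Fin.append_left, Fin.append_right]

theorem relations_LP_append_induction {p : ∀ k, (LP P).Relations k → (Fin k → X) → Prop}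
    (hE : ∀ n hn (x y : Fin n → X), p _ (EsymbP P n hn) (Fin.append x y))
    (hLT : ∀ n hn (x y : Fin n → X), p _ (LTsymbP P n hn) (Fin.append x y))
    {k : ℕ} (R : (LP P).Relations k) (t : Fin k → X) : p k R t := by
  obtain ⟨n, hn, rfl⟩ | ⟨n, hn, rfl⟩ := R
  · exact Fin.append_castAdd_natAdd (f := t) ▸ hE n hn _ _
  · exact Fin.append_castAdd_natAdd (f := t) ▸ hLT n hn _ _

variable [(LP P).Structure X] [(LP P).Structure Y]

theorem eRelP_comp_iff (f : X ↪[LP P] Y) (hn : 0 < n) (x y : Fin n → X) :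
    ERelP P Y n hn (f ∘ x) (f ∘ y) ↔ ERelP P X n hn x y := by
  simpa only [ERelP, comp_append] using f.map_rel (EsymbP P n hn) (Fin.append x y)

theorem ltRelP_comp_iff (f : X ↪[LP P] Y) (hn : n ∈ P) (x y : Fin n → X) :
    LTRelP P Y n hn (f ∘ x) (f ∘ y) ↔ LTRelP P X n hn x y := by
  simpa only [LTRelP, comp_append] using f.map_rel (LTsymbP P n hn) (Fin.append x y)

namespace IsKPStruct

theorem eRelP_of_range_eq (hX : IsKPStruct P X) (hn : 0 < n) {x y : Fin n ↪ X}
    (hxy : Set.range x = Set.range y) : ERelP P X n hn x y := by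
  obtain ⟨-, hperm, hrefl, -⟩ := hX.1 n hn
  let σ : Equiv.Perm (Fin n) := (Equiv.ofInjective x x.injective).trans
    ((Equiv.setCongr hxy).trans (Equiv.ofInjective y y.injective).symm)
  have hσ : y ∘ σ = x := funext fun i => Equiv.apply_ofInjective_symm y.injective _
  exact hσ ▸ hperm y y σ 1 (hrefl y y.injective)

theorem le_two_mul_ncard_range (hX : IsKPStruct P X) {k : ℕ} (R : (LP P).Relations k)
    (t : Fin k → X) : RelMap R t → k ≤ 2 * (Set.range t).ncard := by
  have hcard : ∀ {n} {x y : Fin n → X}, Function.Injective x →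
      n + n ≤ 2 * (Set.range (Fin.append x y)).ncard := by
    intro n x y hx
    have hsub : Set.range x ⊆ Set.range (Fin.append x y) := by
      rintro _ ⟨i, rfl⟩
      exact ⟨Fin.castAdd n i, Fin.append_left x y i⟩
    have hn : (Set.range x).ncard = n := by
      rw [Set.ncard_range_of_injective hx, Nat.card_fin]
    have := Set.ncard_le_ncard hsub (Set.finite_range _)
    lia
  induction R, t using relations_LP_append_induction with
  | hE n hn x y => exact fun h => hcard ((hX.1 n hn).1 x y h).1
  | hLT n hn x y =>
    intro h
    obtain rfl | hn0 := n.eq_zero_or_pos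
    · exact Nat.zero_le _
    · exact hcard ((hX.2 n hn hn0).1 x y h).1

theorem finitelyManyAtomicTypes (hX : IsKPStruct P X) : FinitelyManyAtomicTypes (LP P) X :=
  finitelyManyAtomicTypes_of_arity_le (d := (2 * ·)) (fun _ _ h => Nat.mul_le_mul_left 2 h)
    hX.le_two_mul_ncard_range

/-- Injective `n`-tuples up to `E_n`; the quotient is the set of `E_n`-classes of `n`-element
subsets. -/
def tupleSetoid (hX : IsKPStruct P X) (hn : 0 < n) : Setoid (Fin n ↪ X) where
  r x y := ERelP P X n hn x y
  iseqv := by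
    obtain ⟨-, -, hrefl, hsymm, htrans⟩ := hX.1 n hn
    exact ⟨fun x => hrefl x x.injective, hsymm _ _, htrans _ _ _⟩

/-- The strict order on `E_n`-classes induced by `<_n`. -/
def tupleLT (hX : IsKPStruct P X) (hn : n ∈ P) (hn0 : 0 < n) :
    Quotient (hX.tupleSetoid hn0) → Quotient (hX.tupleSetoid hn0) → Prop :=
  Quotient.lift₂ (fun x y => LTRelP P X n hn x y) fun _ _ _ _ hx hy => by
    obtain ⟨-, hinv, -⟩ := hX.2 n hn hn0
    have hsymm := fun {x y} => (hX.tupleSetoid hn0).symm' (x := x) (y := y)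
    exact propext ⟨hinv _ _ _ _ hx hy, hinv _ _ _ _ (hsymm hx) (hsymm hy)⟩

theorem isStrictTotalOrder_tupleLT (hX : IsKPStruct P X) (hn : n ∈ P) (hn0 : 0 < n) :
    IsStrictTotalOrder _ (hX.tupleLT hn hn0) := by
  obtain ⟨-, -, hirrefl, htrans, htotal⟩ := hX.2 n hn hn0
  refine { trichotomous := ?_, irrefl := ?_, trans := ?_ }
  · rintro ⟨x⟩ ⟨y⟩ hxy hyx
    refine Quotient.sound (by_contra fun h => ?_)
    exact (htotal x y x.injective y.injective h).elim hxy hyx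
  · rintro ⟨x⟩ hx
    exact hirrefl x x hx ((hX.tupleSetoid hn0).refl x)
  · rintro ⟨x⟩ ⟨y⟩ ⟨z⟩
    exact htrans x y z

end IsKPStruct

end LPStructures

/-! ### Rankings -/

section Rankings

variable {P : Set ℕ} {S X Y : Type*} {n : ℕ} {s : ℚ → ℚ → Prop}
  {v : Set S → ℚ} {w : Set X → ℚ} {r : Set Y → ℚ} {f : X → Y} {A : Set X}

/-- The relation `s` between the ranks under `r` of the sets enumerated by two injective tuples. -/
def RankRel (s : ℚ → ℚ → Prop) (r : Set X → ℚ) (x y : Fin n → X) : Prop :=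
  Function.Injective x ∧ Function.Injective y ∧ s (r (Set.range x)) (r (Set.range y))

theorem rankRel_iff_of_injective (x y : Fin n ↪ X) :
    RankRel s w x y ↔ s (w (Set.range x)) (w (Set.range y)) :=
  ⟨fun h => h.2.2, fun h => ⟨x.injective, y.injective, h⟩⟩

theorem iff_rankRel {Q : (Fin n → X) → (Fin n → X) → Prop}
    (hinj : ∀ x y, Q x y → Function.Injective x ∧ Function.Injective y)
    (hQ : ∀ x y : Fin n ↪ X, Q x y ↔ s (w (Set.range x)) (w (Set.range y))) (x y : Fin n → X) :
    Q x y ↔ RankRel s w x y :=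
  ⟨fun h => have ⟨hx, hy⟩ := hinj x y h; ⟨hx, hy, (hQ ⟨x, hx⟩ ⟨y, hy⟩).1 h⟩,
    fun ⟨hx, hy, h⟩ => (hQ ⟨x, hx⟩ ⟨y, hy⟩).2 h⟩

theorem rankRel_comp_iff (hf : Function.Injective f) (hr : ∀ T, r (f '' T) = w T)
    (x y : Fin n → X) : RankRel s r (f ∘ x) (f ∘ y) ↔ RankRel s w x y := by
  simp only [RankRel, hf.of_comp_iff, Set.range_comp, hr]

/-- A rational rank for each set that determines the `L_P`-structure: for each `n` the
`E_n`-classes are the fibres of `r` on `n`-element sets, and `<_n` compares ranks. The values of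
`r` on infinite sets and on `∅` are irrelevant. -/
structure IsRanking (P : Set ℕ) [(LP P).Structure X] (r : Set X → ℚ) : Prop where
  eRelP_iff : ∀ {n} (hn : 0 < n) (x y : Fin n → X), ERelP P X n hn x y ↔ RankRel (· = ·) r x y
  ltRelP_iff : ∀ {n} (hn : n ∈ P) (x y : Fin n → X), LTRelP P X n hn x y ↔ RankRel (· < ·) r x y

/-- The `L_P`-structure with ranking `r`. -/
abbrev rankStructure (P : Set ℕ) (r : Set X → ℚ) : (LP P).Structure X where
  funMap f := isEmptyElim f
  RelMap {_} R t :=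
    match R with
    | .inl m => RankRel (n := m.1) (· = ·) r
        (fun i => t (Fin.cast m.2.2.symm (Fin.castAdd m.1 i)))
        (fun i => t (Fin.cast m.2.2.symm (Fin.natAdd m.1 i)))
    | .inr m => RankRel (n := m.1) (· < ·) r
        (fun i => t (Fin.cast m.2.2.symm (Fin.castAdd m.1 i)))
        (fun i => t (Fin.cast m.2.2.symm (Fin.natAdd m.1 i)))

theorem isRanking_rankStructure (P : Set ℕ) (r : Set X → ℚ) :
    letI := rankStructure P r
    IsRanking P r := by
  let := rankStructure P r
  constructor <;> intro n hn x y
  · simp only [ERelP, EsymbP, RelMap, Fin.cast_eq_self, Fin.append_left, Fin.append_right]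
  · simp only [LTRelP, LTsymbP, RelMap, Fin.cast_eq_self, Fin.append_left, Fin.append_right]

namespace IsRanking

theorem isKPStruct [(LP P).Structure X] (hw : IsRanking P w) : IsKPStruct P X := by
  simp only [IsKPStruct, hw.eRelP_iff, hw.ltRelP_iff, RankRel]
  refine ⟨fun n _ => ⟨fun x y h => ⟨h.1, h.2.1⟩, fun x y σ τ h => ?_, fun x hx => ⟨hx, hx, trivial⟩,
    fun x y h => ⟨h.2.1, h.1, h.2.2.symm⟩, fun x y z h h' => ⟨h.1, h'.2.1, h.2.2.trans h'.2.2⟩⟩,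
    fun n _ _ => ⟨fun x y h => ⟨h.1, h.2.1⟩, fun x x' y y' hx hy h => ?_,
      fun x y h h' => h.2.2.ne h'.2.2, fun x y z h h' => ⟨h.1, h'.2.1, h.2.2.trans h'.2.2⟩,
      fun x y hx hy h => ?_⟩⟩
  · rw [σ.surjective.range_comp, τ.surjective.range_comp]
    exact ⟨h.1.comp σ.injective, h.2.1.comp τ.injective, h.2.2⟩
  · exact ⟨hx.2.1, hy.2.1, hx.2.2 ▸ hy.2.2 ▸ h.2.2⟩
  · obtain hlt | hgt := lt_or_gt_of_ne fun heq => h ⟨hx, hy, heq⟩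
    · exact Or.inl ⟨hx, hy, hlt⟩
    · exact Or.inr ⟨hy, hx, hgt⟩

theorem comap [(LP P).Structure X] [(LP P).Structure Y] (hr : IsRanking P r) (f : X ↪[LP P] Y) :
    IsRanking P fun T => r (f '' T) where
  eRelP_iff hn x y := by
    rw [← eRelP_comp_iff f, hr.eRelP_iff, rankRel_comp_iff f.injective fun _ => rfl]
  ltRelP_iff hn x y := by
    rw [← ltRelP_comp_iff f, hr.ltRelP_iff, rankRel_comp_iff f.injective fun _ => rfl]

/-- Injections that preserve ranks are embeddings. -/
def embedding [(LP P).Structure X] [(LP P).Structure Y] (hw : IsRanking P w) (hr : IsRanking P r)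
    (hf : Function.Injective f) (hrank : ∀ T, r (f '' T) = w T) : X ↪[LP P] Y where
  toFun := f
  inj' := hf
  map_fun' g := isEmptyElim g
  map_rel' R t := by
    induction R, t using relations_LP_append_induction with
    | hE n hn x y =>
      rw [comp_append]
      exact (hr.eRelP_iff hn _ _).trans <|
        (rankRel_comp_iff hf hrank x y).trans (hw.eRelP_iff hn x y).symm
    | hLT n hn x y =>
      rw [comp_append]
      exact (hr.ltRelP_iff hn _ _).trans <|
        (rankRel_comp_iff hf hrank x y).trans (hw.ltRelP_iff hn x y).symm

end IsRanking

theorem exists_strictMono_comp_eq {α β ι : Type*} [LinearOrder α] [Countable α] [LinearOrder β]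
    [DenselyOrdered β] [NoMinOrder β] [NoMaxOrder β] [Nonempty β] [Finite ι] {j : ι → α}
    {V : ι → β} (h : ∀ a b, V a < V b ↔ j a < j b) : ∃ u : α → β, StrictMono u ∧ u ∘ j = V := by
  classical
  cases nonempty_fintype ι
  cases nonempty_encodable α
  have hcmp : ∀ a b, cmp (j a) (j b) = cmp (V a) (V b) := fun a b => by
    simp only [cmp, cmpUsing, h]
  let p : Order.PartialIso α β := ⟨Finset.univ.image fun a => (j a, V a), by
    simp only [Finset.mem_image, Finset.mem_univ, true_and, forall_exists_index,
      forall_apply_eq_imp_iff, hcmp, implies_true]⟩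
  let I := Order.idealOfCofinals p (Order.PartialIso.definedAtLeft β)
  have hI : ∀ a, ∃ b, ∃ q ∈ I, (a, b) ∈ q.1 := fun a => by
    obtain ⟨q, ⟨b, hb⟩, hq⟩ :=
      Order.cofinal_meets_idealOfCofinals p (Order.PartialIso.definedAtLeft β) a
    exact ⟨b, q, hq, hb⟩
  choose u q hqI hq using hI
  have hu : ∀ {a q' b}, q' ∈ I → (a, b) ∈ q'.1 → ∀ a', cmp a' a = cmp (u a') b := by
    intro a q' b hq'I hq' a'
    obtain ⟨m, -, hm, hm'⟩ := I.directed _ (hqI a') _ hq'I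
    exact m.2 _ (hm (hq a')) _ (hm' hq')
  refine ⟨u, fun a b hab => ?_, funext fun a => ?_⟩
  · exact (lt_iff_lt_of_cmp_eq_cmp (hu (hqI b) (hq b) a)).1 hab
  · have hp : (j a, V a) ∈ p.1 := Finset.mem_image_of_mem _ (Finset.mem_univ a)
    have hpI : p ∈ I := Order.mem_idealOfCofinals p _
    exact (eq_iff_eq_of_cmp_eq_cmp (hu hpI hp (j a))).1 rfl

theorem exists_injective_comp_eq {α β ι : Type*} [Finite α] [Infinite β] [Finite ι] {j : ι → α}
    {V : ι → β} (h : ∀ a b, V a = V b ↔ j a = j b) :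
    ∃ u : α → β, Function.Injective u ∧ u ∘ j = V := by
  have : Infinite ↥(Set.range V)ᶜ := (Set.finite_range V).infinite_compl.to_subtype
  let e : α ↪ ↥(Set.range V)ᶜ :=
    (Finite.equivFin α).toEmbedding.trans (Fin.valEmbedding.trans (Infinite.natEmbedding _))
  let u := Function.extend j V fun a => e a
  have hu : ∀ a, u (j a) = V a :=
    Function.FactorsThrough.extend_apply (fun a b => (h a b).2) _
  have hu' : ∀ a, (¬∃ b, j b = a) → u a = e a := Function.extend_apply' _ _
  refine ⟨u, fun a b hab => ?_, funext hu⟩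
  by_cases ha : ∃ c, j c = a <;> by_cases hb : ∃ c, j c = b
  · obtain ⟨⟨a, rfl⟩, ⟨b, rfl⟩⟩ := And.intro ha hb
    exact (h a b).1 (hu a ▸ hu b ▸ hab)
  · obtain ⟨a, rfl⟩ := ha
    rw [hu, hu' b hb] at hab
    exact ((e b).2 ⟨a, hab⟩).elim
  · obtain ⟨b, rfl⟩ := hb
    rw [hu, hu' a ha] at hab
    exact ((e a).2 ⟨b, hab.symm⟩).elim
  · rw [hu' a ha, hu' b hb] at hab
    exact e.injective (Subtype.ext hab)

namespace IsKPStruct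

variable [(LP P).Structure S] [(LP P).Structure X]

theorem exists_classRank [Finite X] (hX : IsKPStruct P X) (hn0 : 0 < n) (i : S ↪[LP P] X)
    (hv : IsRanking P v) :
    ∃ u : Quotient (hX.tupleSetoid hn0) → ℚ, Function.Injective u ∧
      (∀ hn a b, hX.tupleLT hn hn0 a b ↔ u a < u b) ∧
      ∀ x : Fin n ↪ S, u (Quotient.mk _ (x.trans i.toEmbedding)) = v (Set.range x) := by
  have : Finite S := Finite.of_injective i i.injective
  let j (x : Fin n ↪ S) : Quotient (hX.tupleSetoid hn0) := Quotient.mk _ (x.trans i.toEmbedding)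
  let V (x : Fin n ↪ S) : ℚ := v (Set.range x)
  by_cases hn : n ∈ P
  · classical
    have := hX.isStrictTotalOrder_tupleLT hn hn0
    let := linearOrderOfSTO (hX.tupleLT hn hn0)
    have hlt : ∀ a b, V a < V b ↔ j a < j b := fun a b =>
      calc V a < V b ↔ LTRelP P S n hn a b :=
            (rankRel_iff_of_injective a b).symm.trans (hv.ltRelP_iff hn a b).symm
        _ ↔ j a < j b := (ltRelP_comp_iff i hn a b).symm
    obtain ⟨u, hu, huV⟩ := exists_strictMono_comp_eq hlt
    exact ⟨u, hu.injective, fun _ _ _ => hu.lt_iff_lt.symm, congrFun huV⟩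
  · have heq : ∀ a b, V a = V b ↔ j a = j b := fun a b =>
      calc V a = V b ↔ ERelP P S n hn0 a b :=
            (rankRel_iff_of_injective a b).symm.trans (hv.eRelP_iff hn0 a b).symm
        _ ↔ ERelP P X n hn0 (i ∘ a) (i ∘ b) := (eRelP_comp_iff i hn0 a b).symm
        _ ↔ j a = j b := ⟨fun h => Quotient.sound h, fun h => Quotient.exact h⟩
    obtain ⟨u, hu, huV⟩ := exists_injective_comp_eq heq
    exact ⟨u, hu, fun h => absurd h hn, congrFun huV⟩

theorem exists_isRanking_extend [Finite X] (hP : 0 ∉ P) (hX : IsKPStruct P X) (i : S ↪[LP P] X)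
    (hv : IsRanking P v) : ∃ w : Set X → ℚ, IsRanking P w ∧ ∀ T, w (i '' T) = v T := by
  choose u hu_inj hu_lt hu_range using fun n : ℕ+ => hX.exists_classRank n.pos i hv
  let enum (p : Σ n : ℕ+, Fin n ↪ X) : Set X := Set.range p.2
  let rank (p : Σ n : ℕ+, Fin n ↪ X) : ℚ := u p.1 (Quotient.mk _ p.2)
  have hfactors : rank.FactorsThrough enum := by
    rintro ⟨m, x⟩ ⟨n, y⟩ (h : Set.range x = Set.range y)
    have hmn := congrArg Set.ncard h
    rw [Set.ncard_range_of_injective x.injective, Set.ncard_range_of_injective y.injective,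
      Nat.card_fin, Nat.card_fin] at hmn
    obtain rfl := PNat.coe_injective hmn
    exact congrArg (u m) (Quotient.sound (hX.eRelP_of_range_eq m.pos h))
  let w := Function.extend enum rank fun T => v (i ⁻¹' T)
  have hw {n} (hn : 0 < n) (x : Fin n ↪ X) :
      w (Set.range x) = u ⟨n, hn⟩ (Quotient.mk (hX.tupleSetoid hn) x) :=
    hfactors.extend_apply _ ⟨⟨n, hn⟩, x⟩
  refine ⟨w, ⟨fun {n} hn => ?_, fun {n} hn => ?_⟩, fun T => ?_⟩
  · refine iff_rankRel (hX.1 n hn).1 fun x y => ?_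
    rw [hw hn, hw hn]
    exact ⟨fun h => congrArg _ (Quotient.sound h), fun h => Quotient.exact (hu_inj ⟨n, hn⟩ h)⟩
  · have hn0 : 0 < n := n.pos_of_ne_zero fun h => hP (h ▸ hn)
    refine iff_rankRel (hX.2 n hn hn0).1 fun x y => ?_
    rw [hw hn0, hw hn0]
    exact hu_lt ⟨n, hn0⟩ hn (Quotient.mk _ x) (Quotient.mk _ y)
  · have : Finite S := Finite.of_injective i i.injective
    obtain ⟨n, x, rfl⟩ := T.toFinite.fin_embedding
    obtain rfl | hn := n.eq_zero_or_pos
    · rw [Set.range_eq_empty, Set.image_empty]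
      refine (Function.extend_apply' _ _ _ ?_).trans (by rw [Set.preimage_empty])
      rintro ⟨⟨m, y⟩, hy⟩
      have : Nonempty (Fin m) := ⟨⟨0, m.pos⟩⟩
      exact (Set.range_nonempty y).ne_empty hy
    · rw [← Set.range_comp]
      exact (hw hn (x.trans i.toEmbedding)).trans (hu_range ⟨n, hn⟩ x)

end IsKPStruct

end Rankings

/-! ### Generic rankings and the Fraïssé limit -/

section Generic

variable {Ω Ω' X : Type*} {r : Set Ω → ℚ} {w : Set X → ℚ} {f : X → Ω} {A : Set X}

/-- The extension property of a random ranking: over each finite `A` there is a point `c` such that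
the sets `insert c S` with `S ⊆ A` have any prescribed ranks. -/
def IsGeneric (r : Set Ω → ℚ) : Prop :=
  ∀ A : Set Ω, A.Finite → ∀ ρ : Set Ω → ℚ, ∃ c ∉ A, ∀ S ⊆ A, r (insert c S) = ρ S

theorem IsGeneric.comp_image (hr : IsGeneric r) (e : Ω' ≃ Ω) :
    IsGeneric fun S => r (e '' S) := by
  intro A hA ρ
  obtain ⟨c, hc, hcρ⟩ := hr (e '' A) (hA.image e) fun S => ρ (e ⁻¹' S)
  refine ⟨e.symm c, fun h => hc ⟨_, h, e.apply_symm_apply c⟩, fun S hS => ?_⟩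
  beta_reduce
  rw [Set.image_insert_eq, e.apply_symm_apply, hcρ _ (Set.image_mono hS), e.preimage_image]

theorem exists_isGeneric_nat : ∃ r : Set ℕ → ℚ, IsGeneric r := by
  obtain ⟨d, hd⟩ := exists_surjective_nat (Finset ℕ →₀ ℚ)
  -- `c` codes the ranks of the sets with maximum `c`; each finite table of ranks has large codes.
  let table (c : ℕ) : Set ℕ → ℚ := Function.extend (↑) (d c.unpair.1) 0
  refine ⟨fun T => table (sSup T) (T \ {sSup T}), fun A hA ρ => ?_⟩
  obtain ⟨A, rfl⟩ := hA.exists_finset_coe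
  obtain ⟨k, hk⟩ := hd (Finsupp.onFinset A.powerset
    (fun S => if S ⊆ A then ρ S else 0) (by simp +contextual))
  obtain ⟨m, hm⟩ := A.bddAbove
  let c := Nat.pair k (m + 1)
  have hlt : ∀ a ∈ A, a < c := fun a ha =>
    (Nat.lt_succ_of_le (hm ha)).trans_le (Nat.right_le_pair k (m + 1))
  refine ⟨c, fun h => (hlt _ h).false, fun S hS => ?_⟩
  obtain ⟨S, rfl⟩ := (A.finite_toSet.subset hS).exists_finset_coe
  have hsup : sSup (insert c (S : Set ℕ)) = c :=
    IsGreatest.csSup_eq ⟨Set.mem_insert _ _, Set.forall_mem_insert.2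
      ⟨le_rfl, fun a ha => (hlt a (hS ha)).le⟩⟩
  have hdiff : insert c (S : Set ℕ) \ {c} = S :=
    Set.insert_sdiff_self_of_notMem fun h => (hlt _ (hS h)).false
  simp only [hsup, hdiff, table, c, Nat.unpair_pair, Finset.coe_injective.extend_apply, hk,
    Finsupp.onFinset_apply, Finset.coe_subset.1 hS, if_true]

theorem exists_isGeneric (Ω : Type*) [Countable Ω] [Infinite Ω] : ∃ r : Set Ω → ℚ, IsGeneric r :=
  have ⟨_, hr⟩ := exists_isGeneric_nat
  have ⟨e⟩ := nonempty_equiv_of_countable (α := Ω) (β := ℕ)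
  ⟨_, hr.comp_image e⟩

/-- `f` is a partial isomorphism with domain `A` between sets with rankings `w` and `r`. -/
def PreservesRankOn (w : Set X → ℚ) (r : Set Ω → ℚ) (f : X → Ω) (A : Set X) : Prop :=
  A.InjOn f ∧ ∀ T ⊆ A, r (f '' T) = w T

namespace IsGeneric

theorem exists_preservesRankOn_insert (hr : IsGeneric r) (hA : A.Finite)
    (hf : PreservesRankOn w r f A) (a : X) :
    ∃ g, A.EqOn f g ∧ PreservesRankOn w r g (insert a A) := by
  classical
  by_cases ha : a ∈ A
  · exact ⟨f, Set.eqOn_refl f A, by rwa [Set.insert_eq_of_mem ha]⟩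
  obtain ⟨c, hc, hcw⟩ := hr (f '' A) (hA.image f) fun S => w (insert a (A ∩ f ⁻¹' S))
  let g := Function.update f a c
  have hga : g a = c := Function.update_self a c f
  have hgf : A.EqOn f g := fun x hx =>
    (Function.update_of_ne (ne_of_mem_of_not_mem hx ha) c f).symm
  refine ⟨g, hgf, (Set.injOn_insert ha).2 ⟨hf.1.congr hgf, ?_⟩, fun T hT => ?_⟩
  · rwa [hga, ← hgf.image_eq]
  by_cases haT : a ∈ T
  · obtain ⟨S, haS, rfl⟩ : ∃ S, a ∉ S ∧ insert a S = T :=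
      ⟨T \ {a}, Set.notMem_sdiff_of_mem rfl, Set.insert_sdiff_self_of_mem haT⟩
    have hSA : S ⊆ A := (Set.insert_subset_insert_iff haS).1 hT
    rw [Set.image_insert_eq, hga, ← (hgf.mono hSA).image_eq, hcw _ (Set.image_mono hSA),
      Set.inter_comm, hf.1.preimage_image_inter hSA]
  · have hTA : T ⊆ A := (Set.subset_insert_iff_of_notMem haT).1 hT
    rw [← (hgf.mono hTA).image_eq, hf.2 T hTA]

theorem exists_preservesRankOn_univ [Finite X] (hr : IsGeneric r) (hf : PreservesRankOn w r f A) :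
    ∃ g, A.EqOn f g ∧ PreservesRankOn w r g Set.univ := by
  suffices ∀ B : Set X, ∃ g, A.EqOn f g ∧ PreservesRankOn w r g (B ∪ A) by
    simpa only [Set.univ_union] using this Set.univ
  intro B
  induction B, B.toFinite using Set.Finite.induction_on with
  | empty => exact ⟨f, Set.eqOn_refl f A, by rwa [Set.empty_union]⟩
  | @insert b B _ _ ih =>
    obtain ⟨g, hg, hgB⟩ := ih
    obtain ⟨g', hg', hgB'⟩ := hr.exists_preservesRankOn_insert (Set.toFinite _) hgB b
    exact ⟨g', hg.trans (hg'.mono Set.subset_union_right), by rwa [Set.insert_union]⟩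

end IsGeneric

end Generic

universe u

section FraisseLimit

variable {P : Set ℕ} {S X Ω : Type*} [(LP P).Structure S] [(LP P).Structure X]
  [(LP P).Structure Ω] {r : Set Ω → ℚ}

/-- Empty structures embed everywhere, since `L_P` has no nullary relation symbol. -/
def embeddingOfIsEmpty (hP : 0 ∉ P) [IsEmpty S] : S ↪[LP P] X where
  toFun := isEmptyElim
  inj' := Function.injective_of_subsingleton _
  map_fun' g := isEmptyElim g
  map_rel' R t := by
    induction R, t using relations_LP_append_induction with
    | hE n hn x y => exact isEmptyElim (x ⟨0, hn⟩)
    | hLT n hn x y => exact isEmptyElim (x ⟨0, n.pos_of_ne_zero fun h => hP (h ▸ hn)⟩)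

theorem IsGeneric.exists_embedding_comp_eq [Finite X] (hr : IsGeneric r) (hΩ : IsRanking P r)
    (hP : 0 ∉ P) (hX : IsKPStruct P X) (i : S ↪[LP P] X) (f : S ↪[LP P] Ω) :
    ∃ g : X ↪[LP P] Ω, g.comp i = f := by
  obtain ⟨w, hw, hwi⟩ := hX.exists_isRanking_extend hP i (hΩ.comap f)
  have ⟨c, _⟩ := hr ∅ Set.finite_empty r
  let f₀ : X → Ω := Function.extend i f fun _ => c
  have hf₀ : f₀ ∘ i = f := Function.extend_comp i.injective f _
  have hrange : PreservesRankOn w r f₀ (Set.range i) := by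
    refine ⟨i.injective.extend_injOn f.injective, fun T hT => ?_⟩
    obtain ⟨T, rfl⟩ := Set.subset_range_iff_exists_image_eq.1 hT
    rw [← Set.image_comp, hf₀, hwi]
  obtain ⟨g, hg, hg_inj, hg_rank⟩ := hr.exists_preservesRankOn_univ hrange
  refine ⟨hw.embedding hΩ (Set.injOn_univ.1 hg_inj) fun T => hg_rank T T.subset_univ, ?_⟩
  ext s
  exact (hg ⟨s, rfl⟩).symm.trans (congrFun hf₀ s)

theorem IsGeneric.nonempty_embedding [Finite X] (hr : IsGeneric r) (hΩ : IsRanking P r)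
    (hP : 0 ∉ P) (hX : IsKPStruct P X) : Nonempty (X ↪[LP P] Ω) := by
  let := rankStructure P (0 : Set Empty → ℚ)
  obtain ⟨g, -⟩ := hr.exists_embedding_comp_eq hΩ hP hX
    (embeddingOfIsEmpty hP : Empty ↪[LP P] X) (embeddingOfIsEmpty hP)
  exact ⟨g⟩

theorem IsGeneric.isUltrahomogeneous [Countable Ω] (hr : IsGeneric r) (hΩ : IsRanking P r)
    (hP : 0 ∉ P) : (LP P).IsUltrahomogeneous Ω := by
  refine (isUltrahomogeneous_iff_IsExtensionPair Structure.cg_of_countable).2 ?_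
  refine isExtensionPair_iff_exists_embedding_closure_singleton_sup.2 fun D hD f m => ?_
  let D' := Substructure.closure (LP P) {m} ⊔ D
  have : Finite D' :=
    Substructure.fg_iff_finite.1 ((Substructure.fg_closure_singleton m).sup hD)
  obtain ⟨g, hg⟩ := hr.exists_embedding_comp_eq hΩ hP (hΩ.comap D'.subtype).isKPStruct
    (Substructure.inclusion le_sup_right) f
  exact ⟨g, hg.symm⟩

theorem IsGeneric.age_eq_KP {Ω : Type u} [(LP P).Structure Ω] {r : Set Ω → ℚ} (hr : IsGeneric r)
    (hΩ : IsRanking P r) (hP : 0 ∉ P) : (LP P).age Ω = KP P :=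
  Set.ext fun _ =>
    ⟨fun ⟨hfg, ⟨f⟩⟩ => ⟨Structure.fg_iff_finite.1 hfg, (hΩ.comap f).isKPStruct⟩,
      fun ⟨_, hN⟩ => ⟨Structure.fg_iff_finite.2 ‹_›, hr.nonempty_embedding hΩ hP hN⟩⟩

theorem exists_isFraisseLimit_KP (hP : 0 ∉ P) :
    ∃ (M : Type u) (_ : (LP P).Structure M) (_ : Countable M),
      IsKPStruct P M ∧ IsFraisseLimit (KP.{u} P) M := by
  obtain ⟨r, hr⟩ := exists_isGeneric (ULift.{u} ℕ)
  let := rankStructure P r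
  have hrank := isRanking_rankStructure P r
  exact ⟨ULift ℕ, inferInstance, inferInstance, hrank.isKPStruct,
    hr.isUltrahomogeneous hrank hP, hr.age_eq_KP hrank hP⟩

end FraisseLimit

theorem KP_isFraisse_limit_aleph0_categorical_general (P : Set ℕ) (hP : 0 ∉ P) :
    IsFraisse (KP.{u} P) ∧
      ∃ (M : Type) (_ : (LP P).Structure M), Countable M ∧ (LP P).IsUltrahomogeneous M ∧
        (LP P).age M = KP P ∧ Cardinal.aleph0.Categorical ((LP P).completeTheory M) := by
  obtain ⟨M, _, _, -, hM⟩ := exists_isFraisseLimit_KP.{u} hP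
  obtain ⟨N, _, _, hN_KP, hN⟩ := exists_isFraisseLimit_KP.{0} hP
  exact ⟨hM.isFraisse, N, inferInstance, inferInstance, hN.ultrahomogeneous, hN.age,
    categorical_completeTheory_of_isUltrahomogeneous hN.ultrahomogeneous
      hN_KP.finitelyManyAtomicTypes⟩

/-- `K_P` is a Fraïssé class, it has a Fraïssé limit `M` (a countable
ultrahomogeneous `L_P`-structure with age `K_P`), and `Th(M)` is `ℵ₀`-categorical. -/
theorem KP_isFraisse_limit_aleph0_categorical (P : Set ℕ) (hP : ∀ n ∈ P, 3 ≤ n) :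
    IsFraisse (KP P) ∧
      ∃ (M : Type) (inst : (LP P).Structure M), Countable M ∧
        @Language.IsUltrahomogeneous (LP P) M inst ∧ @Language.age (LP P) M inst = KP P ∧
        Cardinal.Categorical Cardinal.aleph0 (@Language.completeTheory (LP P) M inst) :=
  KP_isFraisse_limit_aleph0_categorical_general P fun h => absurd (hP 0 h) (by decide)
end
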